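/- arXiv:1810.09046 — 2 statements merged into one kernel-verified Lean document; each statement's English description precedes it below -/
import Mathlib

section
/- Characterization of generic test tensors: a symmetric matrix x ∈ Matrix (Fin 4) (Fin 4) ℝ lies in the topological interior of the cone D (i.e., x is generic) if and only if ⟨T, x⟩ > 0 for every nonzero symmetric matrix T satisfying the dominant energy condition. -/
open Matrix MeasureTheory Filter Topology

noncomputable section

abbrev Vec4 : Type := Fin 4 → ℝ
abbrev Mat4 : Type := Matrix (Fin 4) (Fin 4) ℝ

/-- The Minkowski inner product on ℝ⁴. -/
def mink (x y : Vec4) : ℝ := x 0 * y 0 - x 1 * y 1 - x 2 * y 2 - x 3 * y 3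

/-- The matrix diag(1,-1,-1,-1). -/
def E : Mat4 := Matrix.diagonal ![1, -1, -1, -1]

def FutureCausal (x : Vec4) : Prop := 0 ≤ mink x x ∧ 0 ≤ x 0
def FutureTimelike (x : Vec4) : Prop := 0 < mink x x ∧ 0 < x 0
def FutureNull (x : Vec4) : Prop := x ≠ 0 ∧ mink x x = 0 ∧ 0 < x 0
def UnitTimelike (x : Vec4) : Prop := FutureTimelike x ∧ mink x x = 1

/-- The dominant energy condition for a matrix. -/
def DEC (T : Mat4) : Prop :=
  ∀ ξ ζ : Vec4, FutureCausal ξ → FutureCausal ζ → 0 ≤ ∑ i, ∑ j, ξ i * T i j * ζ j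

/-- ⟨T, x⟩ = Σᵢⱼ T i j * x i j. -/
def minner (T x : Mat4) : ℝ := ∑ i, ∑ j, T i j * x i j

/-- The cone D of finite sums of symmetrized products of future causal vectors. -/
def coneD : Set Mat4 :=
  { x | ∃ (n : ℕ) (ξ ζ : Fin n → Vec4),
      (∀ k, FutureCausal (ξ k)) ∧ (∀ k, FutureCausal (ζ k)) ∧
      x = ∑ k, (1/2 : ℝ) • (vecMulVec (ξ k) (ζ k) + vecMulVec (ζ k) (ξ k)) }

/-- A symmetric matrix is generic if it lies in the interior of D, taken within
the space of symmetric matrices. -/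
def Generic (x : Mat4) : Prop :=
  ∃ h : xᵀ = x, (⟨x, h⟩ : { A : Mat4 // Aᵀ = A }) ∈
    interior { A : { A : Mat4 // Aᵀ = A } | A.val ∈ coneD }

/-- Partial derivative in the a-th coordinate direction. -/
def pd (a : Fin 4) (f : Vec4 → ℝ) (p : Vec4) : ℝ := fderiv ℝ f p (Pi.single a 1)

def SmoothMatField (T : Vec4 → Mat4) : Prop := ∀ a b, ContDiff ℝ (⊤ : ℕ∞) fun p => T p a b
def SymValued (T : Vec4 → Mat4) : Prop := ∀ p, (T p)ᵀ = T p
def DivFree (T : Vec4 → Mat4) : Prop := ∀ p b, ∑ a, pd a (fun q => T q a b) p = 0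

/-- A collection of fields tracks a curve. -/
def Tracks (C : Set (Vec4 → Mat4)) (γ : ℝ → Vec4) : Prop :=
  ∀ x : Vec4 → Mat4, SmoothMatField x → HasCompactSupport x → SymValued x →
    (∃ O : Set Vec4, IsOpen O ∧ Set.range γ ⊆ O ∧ ∀ p ∈ O, x p ∈ coneD) →
    (∃ t₀ : ℝ, Generic (x (γ t₀))) →
    ∃ T ∈ C, 0 < ∫ p, minner (T p) (x p)

/-- Maxwell stress-energy tensor of a field strength matrix. -/
def maxwellT (F : Mat4) : Mat4 :=
  F * E * F - ((1/4 : ℝ) * (E * F * E * F).trace) • E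

/-- Source-free Maxwell equations. -/
def SolvesMaxwell (F : Vec4 → Mat4) : Prop :=
  (∀ p b, ∑ a, E a a * pd a (fun q => F q a b) p = 0) ∧
  (∀ p a b c, pd a (fun q => F q b c) p + pd b (fun q => F q c a) p
      + pd c (fun q => F q a b) p = 0)

/-- Klein–Gordon stress-energy tensor. -/
def kgT (φ : Vec4 → ℝ) (m : ℝ) (p : Vec4) : Mat4 :=
  Matrix.of fun a b =>
    pd a φ p * pd b φ p
      - (1/2 : ℝ) * E a b * ((∑ c, E c c * (pd c φ p)^2) - m^2 * (φ p)^2)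

/-- Mass-m Klein–Gordon equation. -/
def SolvesKG (φ : Vec4 → ℝ) (m : ℝ) : Prop :=
  ∀ p, pd 0 (pd 0 φ) p - pd 1 (pd 1 φ) p - pd 2 (pd 2 φ) p - pd 3 (pd 3 φ) p
    + m^2 * φ p = 0

theorem FutureCausal.smul {c : ℝ} {v : Vec4} (hc : 0 ≤ c) (hv : FutureCausal v) :
    FutureCausal (c • v) := by
  refine ⟨?_, mul_nonneg hc hv.2⟩
  have h : mink (c • v) (c • v) = c ^ 2 * mink v v := by
    simp only [mink, Pi.smul_apply, smul_eq_mul]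
    ring
  rw [h]
  exact mul_nonneg (sq_nonneg c) hv.1

theorem symm_vecMulVec_mem_coneD {ξ ζ : Vec4} (hξ : FutureCausal ξ) (hζ : FutureCausal ζ) :
    (1 / 2 : ℝ) • (vecMulVec ξ ζ + vecMulVec ζ ξ) ∈ coneD :=
  ⟨1, fun _ => ξ, fun _ => ζ, fun _ => hξ, fun _ => hζ, by simp⟩

theorem zero_mem_coneD : (0 : Mat4) ∈ coneD :=
  ⟨0, fun _ => 0, fun _ => 0, fun k => k.elim0, fun k => k.elim0, by simp⟩

theorem add_mem_coneD {x y : Mat4} (hx : x ∈ coneD) (hy : y ∈ coneD) : x + y ∈ coneD := by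
  obtain ⟨n, ξ, ζ, hξ, hζ, rfl⟩ := hx
  obtain ⟨m, ξ', ζ', hξ', hζ', rfl⟩ := hy
  refine ⟨n + m, Fin.append ξ ξ', Fin.append ζ ζ', fun k => ?_, fun k => ?_, ?_⟩
  · refine Fin.addCases (fun i => ?_) (fun i => ?_) k
    · simpa using hξ i
    · simpa using hξ' i
  · refine Fin.addCases (fun i => ?_) (fun i => ?_) k
    · simpa using hζ i
    · simpa using hζ' i
  · simp only [Fin.sum_univ_add, Fin.append_left, Fin.append_right]

theorem smul_mem_coneD {c : ℝ} (hc : 0 ≤ c) {x : Mat4} (hx : x ∈ coneD) : c • x ∈ coneD := by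
  obtain ⟨n, ξ, ζ, hξ, hζ, rfl⟩ := hx
  refine ⟨n, fun k => c • ξ k, ζ, fun k => (hξ k).smul hc, hζ, ?_⟩
  rw [Finset.smul_sum]
  refine Finset.sum_congr rfl fun k _ => ?_
  rw [smul_comm, smul_add, smul_vecMulVec, vecMulVec_smul]

theorem sum_mem_coneD {ι : Type*} (s : Finset ι) {f : ι → Mat4} (hf : ∀ i ∈ s, f i ∈ coneD) :
    ∑ i ∈ s, f i ∈ coneD :=
  Finset.sum_induction f (· ∈ coneD) (fun _ _ => add_mem_coneD) zero_mem_coneD hf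

theorem minner_eq_trace (T x : Mat4) : minner T x = (T * xᵀ).trace := by
  simp [minner, Matrix.trace, Matrix.mul_apply]

theorem minner_self_pos {T : Mat4} (hT : T ≠ 0) : 0 < minner T T := by
  obtain ⟨i, j, hij⟩ : ∃ i j, T i j ≠ 0 := by
    by_contra! h
    exact hT (by ext i j; exact h i j)
  refine Finset.sum_pos' (fun i _ => Finset.sum_nonneg fun j _ => mul_self_nonneg _)
    ⟨i, Finset.mem_univ i, Finset.sum_pos' (fun j _ => mul_self_nonneg _)
      ⟨j, Finset.mem_univ j, mul_self_pos.2 hij⟩⟩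

theorem minner_sub_smul (T x : Mat4) (c : ℝ) :
    minner T (x - c • T) = minner T x - c * minner T T := by
  simp only [minner_eq_trace, transpose_sub, transpose_smul, Matrix.mul_sub, trace_sub,
    Matrix.mul_smul, trace_smul, smul_eq_mul]

theorem minner_symm_vecMulVec {T : Mat4} (hT : Tᵀ = T) (ξ ζ : Vec4) :
    minner T ((1 / 2 : ℝ) • (vecMulVec ξ ζ + vecMulVec ζ ξ)) = ∑ i, ∑ j, ξ i * T i j * ζ j := by
  have hs : ∀ i j, T i j = T j i := fun i j => congrFun (congrFun hT j) i
  have h : ∑ i, ∑ j, T i j * (ζ i * ξ j) = ∑ i, ∑ j, T i j * (ξ i * ζ j) := by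
    rw [Finset.sum_comm]
    refine Finset.sum_congr rfl fun i _ => Finset.sum_congr rfl fun j _ => ?_
    rw [hs j i]
    ring
  calc minner T ((1 / 2 : ℝ) • (vecMulVec ξ ζ + vecMulVec ζ ξ))
      = (1 / 2) * (∑ i, ∑ j, T i j * (ξ i * ζ j) + ∑ i, ∑ j, T i j * (ζ i * ξ j)) := by
        simp only [minner, Matrix.smul_apply, Matrix.add_apply, vecMulVec_apply, smul_eq_mul,
          ← Finset.sum_add_distrib, Finset.mul_sum]
        refine Finset.sum_congr rfl fun i _ => Finset.sum_congr rfl fun j _ => ?_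
        ring
    _ = ∑ i, ∑ j, T i j * (ξ i * ζ j) := by rw [h]; ring
    _ = _ := Finset.sum_congr rfl fun i _ => Finset.sum_congr rfl fun j _ => by ring

theorem minner_nonneg_of_mem_coneD {T x : Mat4} (hT : Tᵀ = T) (hdec : DEC T) (hx : x ∈ coneD) :
    0 ≤ minner T x := by
  obtain ⟨n, ξ, ζ, hξ, hζ, rfl⟩ := hx
  rw [minner_eq_trace, transpose_sum, Matrix.mul_sum, trace_sum]
  refine Finset.sum_nonneg fun k _ => ?_
  rw [← minner_eq_trace, minner_symm_vecMulVec hT]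
  exact hdec _ _ (hξ k) (hζ k)

/-- The subspace of symmetric matrices. -/
def symmSubmodule : Submodule ℝ Mat4 where
  carrier := {A | Aᵀ = A}
  add_mem' {A B} hA hB := by
    rw [Set.mem_ofPred_eq] at *
    rw [transpose_add, hA, hB]
  zero_mem' := transpose_zero
  smul_mem' c A hA := by
    rw [Set.mem_ofPred_eq] at *
    rw [transpose_smul, hA]

/-- The cone `coneD`, viewed in the subspace of symmetric matrices. -/
def symmConeD : Set symmSubmodule := {A | A.val ∈ coneD}

theorem convex_symmConeD : Convex ℝ symmConeD := fun _ hx _ hy _ _ ha hb _ =>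
  add_mem_coneD (smul_mem_coneD ha hx) (smul_mem_coneD hb hy)

/-- The matrix whose columns are a basis of future causal vectors. -/
def causalBasis : Mat4 := !![1, 1, 1, 1; 0, 1, 0, 0; 0, 0, 1, 0; 0, 0, 0, 1]

/-- The inverse of `causalBasis`. -/
def causalCobasis : Mat4 := !![1, -1, -1, -1; 0, 1, 0, 0; 0, 0, 1, 0; 0, 0, 0, 1]

theorem causalBasis_mul_causalCobasis : causalBasis * causalCobasis = 1 := by
  ext i j
  fin_cases i <;> fin_cases j <;>
    simp [causalBasis, causalCobasis, Matrix.mul_apply, Fin.sum_univ_four]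

theorem futureCausal_causalBasis_col (k : Fin 4) : FutureCausal (causalBasis.col k) := by
  fin_cases k <;> simp [FutureCausal, mink, causalBasis, Matrix.col]

theorem mem_coneD_of_coeff_nonneg {A : Mat4} (hA : Aᵀ = A)
    (h : ∀ i j, 0 ≤ (causalCobasis * A * causalCobasisᵀ) i j) : A ∈ coneD := by
  set C := causalCobasis * A * causalCobasisᵀ with hC
  have hAC : A = causalBasis * C * causalBasisᵀ := by
    calc A = (causalBasis * causalCobasis) * A * (causalBasis * causalCobasis)ᵀ := by
          rw [causalBasis_mul_causalCobasis]; simp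
      _ = _ := by rw [hC, transpose_mul]; simp only [Matrix.mul_assoc]
  have hsum : A = ∑ i, ∑ j, C i j • vecMulVec (causalBasis.col i) (causalBasis.col j) := by
    conv_lhs => rw [hAC]
    ext a b
    simp only [Matrix.mul_apply, transpose_apply, Matrix.sum_apply, Matrix.smul_apply,
      vecMulVec_apply, Matrix.col_apply, smul_eq_mul, Finset.sum_mul]
    rw [Finset.sum_comm]
    refine Finset.sum_congr rfl fun i _ => Finset.sum_congr rfl fun j _ => ?_
    ring
  have hsymm : A = ∑ i, ∑ j, C i j • ((1 / 2 : ℝ) •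
      (vecMulVec (causalBasis.col i) (causalBasis.col j) +
        vecMulVec (causalBasis.col j) (causalBasis.col i))) := by
    have hT : A = ∑ i, ∑ j, C i j • vecMulVec (causalBasis.col j) (causalBasis.col i) := by
      conv_lhs => rw [← hA, hsum]
      simp only [transpose_sum, transpose_smul, transpose_vecMulVec]
    calc A = (1 / 2 : ℝ) • (A + A) := by rw [← two_smul ℝ A, smul_smul]; norm_num
      _ = _ := by
        conv_lhs => rw [congrArg₂ (· + ·) hsum hT]
        simp only [← Finset.sum_add_distrib, Finset.smul_sum, ← smul_add]
        refine Finset.sum_congr rfl fun i _ => Finset.sum_congr rfl fun j _ => ?_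
        rw [smul_comm]
  rw [hsymm]
  exact sum_mem_coneD _ fun i _ => sum_mem_coneD _ fun j _ => smul_mem_coneD (h i j)
    (symm_vecMulVec_mem_coneD (futureCausal_causalBasis_col i) (futureCausal_causalBasis_col j))

theorem interior_symmConeD_nonempty : (interior symmConeD).Nonempty := by
  let U : Set symmSubmodule :=
    {A | ∀ i j, 0 < (causalCobasis * A.val * causalCobasisᵀ) i j}
  have hU : IsOpen U := by
    simp only [U, Set.ofPred_forall]
    refine isOpen_iInter_of_finite fun i => isOpen_iInter_of_finite fun j => ?_
    refine isOpen_lt continuous_const (Continuous.matrix_elem ?_ i j)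
    exact (continuous_const.matrix_mul continuous_subtype_val).matrix_mul continuous_const
  have hUD : U ⊆ symmConeD := fun A hA => mem_coneD_of_coeff_nonneg A.2 fun i j => (hA i j).le
  let J : Mat4 := Matrix.of fun _ _ => 1
  have hinv : causalCobasis * causalBasis = 1 :=
    mul_eq_one_comm.1 causalBasis_mul_causalCobasis
  refine ⟨⟨causalBasis * J * causalBasisᵀ, ?_⟩, interior_maximal hUD hU fun i j => ?_⟩
  · change (causalBasis * J * causalBasisᵀ)ᵀ = _
    rw [transpose_mul, transpose_mul, transpose_transpose, Matrix.mul_assoc]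
    rfl
  · have h : causalCobasis * (causalBasis * J * causalBasisᵀ) * causalCobasisᵀ = J := by
      calc _ = (causalCobasis * causalBasis) * J * (causalCobasis * causalBasis)ᵀ := by
            rw [transpose_mul]; simp only [Matrix.mul_assoc]
        _ = J := by rw [hinv]; simp
    simp only [h]
    exact one_pos

theorem exists_minner_eq (f : symmSubmodule →ₗ[ℝ] ℝ) :
    ∃ T : Mat4, Tᵀ = T ∧ ∀ A : symmSubmodule, f A = minner T A.val := by
  let p : Mat4 →ₗ[ℝ] symmSubmodule :=
    { toFun := fun A => ⟨(1 / 2 : ℝ) • (A + Aᵀ), by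
        change ((1 / 2 : ℝ) • (A + Aᵀ))ᵀ = _
        rw [transpose_smul, transpose_add, transpose_transpose, add_comm]⟩
      map_add' := fun A B => Subtype.ext <| by
        simp only [transpose_add, Submodule.coe_add, ← smul_add]
        congr 1
        abel
      map_smul' := fun c A => Subtype.ext <| by
        simp only [transpose_smul, ← smul_add, RingHom.id_apply, Submodule.coe_smul]
        rw [smul_comm] }
  have hp : ∀ A : symmSubmodule, p A.val = A := fun A => Subtype.ext <| by
    change (1 / 2 : ℝ) • (A.val + A.valᵀ) = A.val
    rw [show A.valᵀ = A.val from A.2, ← two_smul ℝ A.val, smul_smul]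
    norm_num
  have hpt : ∀ A : Mat4, p Aᵀ = p A := fun A => Subtype.ext <| by
    change (1 / 2 : ℝ) • (Aᵀ + Aᵀᵀ) = (1 / 2 : ℝ) • (A + Aᵀ)
    rw [transpose_transpose, add_comm]
  refine ⟨Matrix.of fun i j => f (p (Matrix.single i j 1)), ?_, fun A => ?_⟩
  · ext i j
    rw [transpose_apply, of_apply, of_apply, ← hpt, transpose_single]
  · conv_lhs => rw [← hp A, matrix_eq_sum_single A.val]
    simp only [map_sum, minner, of_apply]
    refine Finset.sum_congr rfl fun i _ => Finset.sum_congr rfl fun j _ => ?_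
    rw [show Matrix.single i j (A.val i j) = A.val i j • Matrix.single i j (1 : ℝ) by
      simp [smul_single], map_smul, map_smul, smul_eq_mul, mul_comm]

theorem minner_pos_of_mem_interior {x : symmSubmodule} (hx : x ∈ interior symmConeD) {T : Mat4}
    (hT : Tᵀ = T) (hdec : DEC T) (hT0 : T ≠ 0) : 0 < minner T x.val := by
  let T' : symmSubmodule := ⟨T, hT⟩
  have hcont : Tendsto (fun c : ℝ => x - c • T') (𝓝[>] 0) (𝓝 x) := by
    have h : Continuous fun c : ℝ => x - c • T' := by fun_prop
    simpa using (h.tendsto 0).mono_left nhdsWithin_le_nhds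
  obtain ⟨c, hcD, hc⟩ :=
    ((hcont.eventually (mem_interior_iff_mem_nhds.1 hx)).and self_mem_nhdsWithin).exists
  have h := minner_nonneg_of_mem_coneD hT hdec (x := x.val - c • T) hcD
  rw [minner_sub_smul] at h
  linarith [mul_pos (Set.mem_Ioi.1 hc) (minner_self_pos hT0)]

theorem exists_dec_minner_nonpos {x : symmSubmodule} (hx : x ∉ interior symmConeD) :
    ∃ T : Mat4, Tᵀ = T ∧ DEC T ∧ T ≠ 0 ∧ minner T x.val ≤ 0 := by
  obtain ⟨f, hf⟩ := geometric_hahn_banach_open_point convex_symmConeD.interior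
    isOpen_interior hx
  have hle : ∀ y ∈ symmConeD, f y ≤ f x := by
    intro y hy
    have hy' : y ∈ closure (interior symmConeD) := by
      rw [convex_symmConeD.closure_interior_eq_closure_of_nonempty_interior
        interior_symmConeD_nonempty]
      exact subset_closure hy
    exact closure_minimal (t := {y | f y ≤ f x}) (fun a ha => (hf a ha).le)
      (isClosed_le f.continuous continuous_const) hy'
  have hx0 : 0 ≤ f x := by simpa using hle 0 zero_mem_coneD
  have hneg : ∀ y ∈ symmConeD, f y ≤ 0 := by
    intro y hy
    by_contra! hpos
    have h := hle (((f x + 1) / f y) • y) (smul_mem_coneD (by positivity) hy)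
    rw [map_smul, smul_eq_mul, div_mul_cancel₀ _ hpos.ne'] at h
    linarith
  obtain ⟨T, hT, hfT⟩ := exists_minner_eq (-f).toLinearMap
  replace hfT : ∀ A : symmSubmodule, -f A = minner T A.val := hfT
  refine ⟨T, hT, fun ξ ζ hξ hζ => ?_, ?_, ?_⟩
  · have hmem := symm_vecMulVec_mem_coneD hξ hζ
    have hsymm : (1 / 2 : ℝ) • (vecMulVec ξ ζ + vecMulVec ζ ξ) ∈ symmSubmodule := by
      change ((1 / 2 : ℝ) • (vecMulVec ξ ζ + vecMulVec ζ ξ))ᵀ = _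
      rw [transpose_smul, transpose_add, transpose_vecMulVec, transpose_vecMulVec, add_comm]
    rw [← minner_symm_vecMulVec hT, ← hfT ⟨_, hsymm⟩]
    exact neg_nonneg.2 (hneg _ hmem)
  · rintro rfl
    obtain ⟨d, hd⟩ := interior_symmConeD_nonempty
    have hzero : ∀ A : symmSubmodule, f A = 0 := fun A => by
      simpa [minner] using hfT A
    simpa [hzero] using hf d hd
  · rw [← hfT]
    linarith

/-- Characterization of generic test tensors. -/
theorem generic_iff_pos_on_dec (x : Mat4) (hsym : xᵀ = x) :
    Generic x ↔ ∀ T : Mat4, Tᵀ = T → DEC T → T ≠ 0 → 0 < minner T x := by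
  have hgen : Generic x ↔ (⟨x, hsym⟩ : symmSubmodule) ∈ interior symmConeD :=
    ⟨fun ⟨_, h⟩ => h, fun h => ⟨hsym, h⟩⟩
  rw [hgen]
  refine ⟨fun hx T hT hdec hT0 => minner_pos_of_mem_interior hx hT hdec hT0, fun h => ?_⟩
  by_contra hx
  obtain ⟨T, hT, hdec, hT0, hle⟩ := exists_dec_minner_nonpos hx
  exact (h T hT hdec hT0).not_ge hle
end
end

section
/- Geroch–Jang theorem in Minkowski spacetime: let γ : ℝ → ℝ⁴ be a smooth curve with γ'(t) future timelike for every t. Suppose that for every open set O ⊆ ℝ⁴ containing the range of γ there exists a smooth field T : ℝ⁴ → Matrix (Fin 4) (Fin 4) ℝ with symmetric values, satisfying the dominant energy condition at every point, divergence-free, not identically zero, and whose topological support (the closure of {p : T(p) ≠ 0}) is contained in O. Then γ is a geodesic up to parameterization: for every t ∈ ℝ there exists c ∈ ℝ with γ''(t) = c • γ'(t). -/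
open Matrix MeasureTheory Filter Topology

noncomputable section

/-- The point of ℝ⁴ with time coordinate `s` and spatial coordinates `x`. -/
def slicePoint (s : ℝ) (x : Fin 3 → ℝ) : Vec4 := Fin.cons s x

@[simp] lemma slicePoint_zero (s : ℝ) (x : Fin 3 → ℝ) : slicePoint s x 0 = s := rfl

@[simp] lemma slicePoint_succ (s : ℝ) (x : Fin 3 → ℝ) (i : Fin 3) :
    slicePoint s x i.succ = x i := rfl

lemma slicePoint_tail (p : Vec4) : slicePoint (p 0) (fun i => p i.succ) = p := by
  ext i
  refine Fin.cases rfl (fun _ => rfl) i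

lemma continuous_slicePoint : Continuous fun q : ℝ × (Fin 3 → ℝ) => slicePoint q.1 q.2 := by
  refine continuous_pi fun i => ?_
  refine Fin.cases ?_ (fun j => ?_) i
  · exact continuous_fst
  · exact (continuous_apply j).comp continuous_snd

lemma norm_le_norm_slicePoint (s : ℝ) (x : Fin 3 → ℝ) : ‖x‖ ≤ ‖slicePoint s x‖ :=
  (pi_norm_le_iff_of_nonneg (norm_nonneg _)).2 fun i => norm_le_pi_norm (slicePoint s x) i.succ

lemma slicePoint_add_time (s t : ℝ) (x : Fin 3 → ℝ) :
    slicePoint (s + t) x = slicePoint s x + t • (Pi.single 0 1 : Vec4) := by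
  ext i
  refine Fin.cases (by simp) (fun j => by simp) i

lemma slicePoint_add_space (s t : ℝ) (x : Fin 3 → ℝ) (i : Fin 3) :
    slicePoint s (x + t • (Pi.single i 1 : Fin 3 → ℝ))
      = slicePoint s x + t • (Pi.single i.succ 1 : Vec4) := by
  ext j
  refine Fin.cases (by simp) (fun k => by simp [Pi.single_apply]) j

/-- A scalar field whose support meets every slab of bounded time in a bounded set. -/
def SpatiallyBounded (C : ℝ) (f : Vec4 → ℝ) : Prop := ∀ p, f p ≠ 0 → ‖p‖ ≤ C + |p 0|

lemma SpatiallyBounded.pd {C : ℝ} {f : Vec4 → ℝ} (hf : SpatiallyBounded C f) (a : Fin 4) :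
    SpatiallyBounded C (pd a f) := by
  intro p hp
  have hcl : IsClosed {p : Vec4 | ‖p‖ ≤ C + |p 0|} :=
    isClosed_le continuous_norm (by fun_prop)
  have hsub : tsupport f ⊆ {p : Vec4 | ‖p‖ ≤ C + |p 0|} := closure_minimal hf hcl
  refine hsub (support_fderiv_subset ℝ (f := f) fun h0 => hp ?_)
  simp [_root_.pd, h0]

lemma SpatiallyBounded.hasCompactSupport {C : ℝ} {f : Vec4 → ℝ} (hf : SpatiallyBounded C f)
    (s : ℝ) : HasCompactSupport fun x => f (slicePoint s x) := by
  refine HasCompactSupport.intro (isCompact_closedBall (0 : Fin 3 → ℝ) (C + |s|)) fun x hx => ?_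
  by_contra h0
  exact hx (mem_closedBall_zero_iff.2 ((norm_le_norm_slicePoint s x).trans (hf _ h0)))

lemma SpatiallyBounded.integrable {C : ℝ} {f : Vec4 → ℝ} (hf : SpatiallyBounded C f)
    (hc : Continuous f) (s : ℝ) : Integrable fun x => f (slicePoint s x) :=
  (hc.comp (continuous_slicePoint.comp (Continuous.prodMk_right s))).integrable_of_hasCompactSupport
    (hf.hasCompactSupport s)

lemma continuous_pd {f : Vec4 → ℝ} (hf : ContDiff ℝ 1 f) (a : Fin 4) : Continuous (pd a f) :=
  (hf.continuous_fderiv one_ne_zero).clm_apply continuous_const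

lemma hasDerivAt_pd {f : Vec4 → ℝ} (hf : ContDiff ℝ 1 f) (a : Fin 4) (p : Vec4) :
    HasDerivAt (fun t : ℝ => f (p + t • (Pi.single a 1 : Vec4))) (pd a f p) 0 :=
  ((hf.differentiable one_ne_zero) p).hasFDerivAt.hasLineDerivAt _

lemma integral_pd_succ {C : ℝ} {f : Vec4 → ℝ} (hf : SpatiallyBounded C f)
    (hc : ContDiff ℝ 1 f) (i : Fin 3) (s : ℝ) :
    ∫ x, pd i.succ f (slicePoint s x) = 0 := by
  have key := integral_bilinear_hasLineDerivAt_right_eq_neg_left_of_integrable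
    (μ := (volume : Measure (Fin 3 → ℝ))) (f := fun _ => (1 : ℝ)) (f' := fun _ => 0)
    (g := fun x => f (slicePoint s x)) (g' := fun x => pd i.succ f (slicePoint s x))
    (v := Pi.single i 1) (B := ContinuousLinearMap.mul ℝ ℝ)
    (by simp) (by simpa using (hf.pd _).integrable (continuous_pd hc _) s)
    (by simpa using hf.integrable hc.continuous s)
    (fun x _ => by simpa [HasLineDerivAt] using hasDerivAt_const (0 : ℝ) (1 : ℝ))
    (fun x _ => by
      simpa only [HasLineDerivAt, slicePoint_add_space] using hasDerivAt_pd hc _ _)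
  simpa using key

lemma hasDerivAt_integral_slice {C : ℝ} {f : Vec4 → ℝ} (hf : SpatiallyBounded C f)
    (hc : ContDiff ℝ 1 f) (s₀ : ℝ) :
    HasDerivAt (fun s => ∫ x, f (slicePoint s x)) (∫ x, pd 0 f (slicePoint s₀ x)) s₀ := by
  set K : Set (Fin 3 → ℝ) := Metric.closedBall 0 (C + |s₀| + 1)
  have hcont : Continuous fun q : ℝ × (Fin 3 → ℝ) => pd 0 f (slicePoint q.1 q.2) :=
    (continuous_pd hc 0).comp continuous_slicePoint
  obtain ⟨B, hB⟩ := ((isCompact_closedBall s₀ 1).prod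
    (isCompact_closedBall (0 : Fin 3 → ℝ) (C + |s₀| + 1))).exists_bound_of_continuousOn
      hcont.continuousOn
  refine (hasDerivAt_integral_of_dominated_loc_of_deriv_le (s := Metric.closedBall s₀ 1)
    (F := fun s x => f (slicePoint s x)) (F' := fun s x => pd 0 f (slicePoint s x))
    (bound := K.indicator fun _ => B)
    (Metric.closedBall_mem_nhds s₀ one_pos)
    (Eventually.of_forall fun s => (hf.integrable hc.continuous s).aestronglyMeasurable)
    (hf.integrable hc.continuous s₀)
    ((hf.pd 0).integrable (continuous_pd hc 0) s₀).aestronglyMeasurable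
    (ae_of_all _ fun x s hs => ?_) ?_ (ae_of_all _ fun x s _ => ?_)).2
  · by_cases hx : x ∈ K
    · simpa [hx] using hB (s, x) ⟨hs, hx⟩
    · have h0 : pd 0 f (slicePoint s x) = 0 := by
        by_contra h0
        refine hx (mem_closedBall_zero_iff.2 ?_)
        have h1 := (norm_le_norm_slicePoint s x).trans (hf.pd 0 _ h0)
        have h2 : |s - s₀| ≤ 1 := hs
        have h3 := abs_sub_abs_le_abs_sub s s₀
        simp only [slicePoint_zero] at h1
        linarith
      simp [hx, h0]
  · exact (integrable_indicator_iff Metric.isClosed_closedBall.measurableSet).2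
      (integrableOn_const (isCompact_closedBall _ _).measure_lt_top.ne)
  · have h1 := hasDerivAt_pd hc 0 (slicePoint s x)
    simp only [← slicePoint_add_time] at h1
    have h2 : HasDerivAt (fun t : ℝ => f (slicePoint (s + (t - s)) x))
        (pd 0 f (slicePoint s x)) s := by
      refine HasDerivAt.comp_sub_const s s (f := fun t => f (slicePoint (s + t) x)) ?_
      simpa using h1
    simpa using h2

/-- The balance law for the total charge of a current `J` on the slices of constant time. -/
lemma hasDerivAt_integral_charge {C : ℝ} {J : Fin 4 → Vec4 → ℝ}
    (hJ : ∀ a, SpatiallyBounded C (J a)) (hc : ∀ a, ContDiff ℝ 1 (J a)) (s : ℝ) :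
    HasDerivAt (fun s => ∫ x, J 0 (slicePoint s x))
      (∫ x, ∑ a, pd a (J a) (slicePoint s x)) s := by
  rw [integral_finsetSum _ fun a _ => ((hJ a).pd a).integrable (continuous_pd (hc a) a) s,
    Fin.sum_univ_succ, Finset.sum_eq_zero fun i _ => integral_pd_succ (hJ i.succ) (hc i.succ) i s,
    add_zero]
  exact hasDerivAt_integral_slice (hJ 0) (hc 0) s

lemma DEC.nonneg {T : Mat4} (hT : DEC T) : 0 ≤ T 0 0 := by
  have := hT (Pi.single 0 1) (Pi.single 0 1) (by simp [FutureCausal, mink])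
    (by simp [FutureCausal, mink])
  simpa [Fin.sum_univ_four] using this

lemma futureCausal_null (i : Fin 3) {ε : ℝ} (hε : ε ^ 2 = 1) :
    FutureCausal (Pi.single 0 1 + ε • Pi.single i.succ 1) := by
  fin_cases i <;> simp [FutureCausal, mink] <;> nlinarith

lemma DEC.eq_zero {T : Mat4} (hT : DEC T) (hs : Tᵀ = T) (h0 : T 0 0 = 0) : T = 0 := by
  have hpair : ∀ (i j : Fin 3) (ε δ : ℝ), ε ^ 2 = 1 → δ ^ 2 = 1 →
      0 ≤ T 0 0 + δ * T 0 j.succ + ε * T i.succ 0 + ε * δ * T i.succ j.succ := by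
    intro i j ε δ hε hδ
    have := hT _ _ (futureCausal_null i hε) (futureCausal_null j hδ)
    convert this using 1
    simp only [Pi.add_apply, Pi.smul_apply, Pi.single_apply, smul_eq_mul, mul_ite, mul_one,
      mul_zero, Fin.sum_univ_succ (n := 3), add_mul, mul_add, ite_mul, zero_mul, one_mul,
      Finset.sum_add_distrib, Finset.sum_ite_eq', Fin.succ_inj, Finset.mem_univ, if_true,
      Fin.succ_ne_zero, if_false, (Fin.succ_ne_zero _).symm, Finset.sum_const_zero]
    ring
  have hcol : ∀ i : Fin 3, T i.succ 0 = T 0 i.succ := fun i => congrFun (congrFun hs 0) i.succ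
  have hrow : ∀ j : Fin 3, T 0 j.succ = 0 := by
    intro j
    have h1 := hpair j j 1 1 (by norm_num) (by norm_num)
    have h2 := hpair j j (-1) (-1) (by norm_num) (by norm_num)
    have h3 := hpair j j 1 (-1) (by norm_num) (by norm_num)
    have h4 := hT (Pi.single 0 1) _ (by simp [FutureCausal, mink])
      (futureCausal_null j (ε := 1) (by norm_num))
    have h5 := hT (Pi.single 0 1) _ (by simp [FutureCausal, mink])
      (futureCausal_null j (ε := -1) (by norm_num))
    simp [Fin.sum_univ_succ (n := 3), Pi.single_apply, Fin.succ_ne_zero, h0,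
      (Fin.succ_ne_zero _).symm] at h4 h5
    linarith
  ext a b
  refine Fin.cases ?_ (fun i => ?_) a <;> refine Fin.cases ?_ (fun j => ?_) b
  · exact h0
  · exact hrow j
  · exact (hcol i).trans (hrow i)
  · have h1 := hpair i j 1 1 (by norm_num) (by norm_num)
    have h2 := hpair i j 1 (-1) (by norm_num) (by norm_num)
    rw [hcol, hrow, hrow, h0] at h1 h2
    simp only [Matrix.zero_apply]
    linarith

/-- The centre of mass of a nonzero conserved field moves along an affine line which meets the
convex hull of every slice of the support. -/
lemma exists_centerOfMass {T : Vec4 → Mat4} (hsm : SmoothMatField T) (hsym : SymValued T)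
    (hdec : ∀ p, DEC (T p)) (hdiv : DivFree T) (hne : T ≠ 0) {C : ℝ}
    (hC : ∀ p, T p ≠ 0 → ‖p‖ ≤ C + |p 0|) :
    ∃ m v : Fin 3 → ℝ, ∀ (s z δ : ℝ) (i : Fin 3),
      (∀ p, p 0 = s → T p ≠ 0 → |p i.succ - z| ≤ δ) → |m i + s * v i - z| ≤ δ := by
  have hsm1 : ∀ a b, ContDiff ℝ 1 fun p => T p a b := fun a b =>
    (hsm a b).of_le (by exact_mod_cast le_top)
  have hbd : ∀ a b, SpatiallyBounded C fun p => T p a b := fun a b p hp =>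
    hC p fun h0 => hp (by simp [h0])
  have hcons : ∀ b s, HasDerivAt (fun s => ∫ x, T (slicePoint s x) 0 b) 0 s := by
    intro b s
    have := hasDerivAt_integral_charge (J := fun a p => T p a b) (fun a => hbd a b)
      (fun a => hsm1 a b) s
    simpa only [hdiv _ b, integral_zero] using this
  have hconst : ∀ b s, ∫ x, T (slicePoint s x) 0 b = ∫ x, T (slicePoint 0 x) 0 b := fun b s =>
    is_const_of_deriv_eq_zero (fun s => (hcons b s).differentiableAt) (fun s => (hcons b s).deriv)
      s 0
  set e : ℝ := ∫ x, T (slicePoint 0 x) 0 0 with he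
  have hint : ∀ s, Integrable fun x => T (slicePoint s x) 0 0 := fun s =>
    (hbd 0 0).integrable (hsm1 0 0).continuous s
  have hepos : 0 < e := by
    obtain ⟨p, hp⟩ : ∃ p, T p ≠ 0 := by
      by_contra! h0
      exact hne (funext h0)
    rw [he, ← hconst 0 (p 0)]
    refine Continuous.integral_pos_of_hasCompactSupport_nonneg_nonzero (x := fun i => p i.succ)
      ((hsm1 0 0).continuous.comp (continuous_slicePoint.comp (Continuous.prodMk_right (p 0))))
      ((hbd 0 0).hasCompactSupport _) (fun x => (hdec _).nonneg) ?_
    have h1 : T (slicePoint (p 0) fun i => p i.succ) = T p := by rw [slicePoint_tail]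
    simp only [h1]
    exact fun h0 => hp ((hdec p).eq_zero (hsym p) h0)
  have hmom_bd : ∀ (i : Fin 3) a, SpatiallyBounded C fun p => p i.succ * T p a 0 :=
    fun i a p hp => hbd a 0 p (right_ne_zero_of_mul hp)
  have hmom_sm : ∀ (i : Fin 3) a, ContDiff ℝ 1 fun p : Vec4 => p i.succ * T p a 0 :=
    fun i a => (contDiff_apply ℝ ℝ i.succ).mul (hsm1 a 0)
  have hpd : ∀ (i : Fin 3) a p, pd a (fun p : Vec4 => p i.succ * T p a 0) p
      = p i.succ * pd a (fun p => T p a 0) p + (if a = i.succ then T p a 0 else 0) := by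
    intro i a p
    have h1 := ((hasFDerivAt_apply (𝕜 := ℝ) i.succ p).mul
      ((hsm1 a 0).differentiable one_ne_zero p).hasFDerivAt).fderiv
    simp only [pd]
    erw [h1]
    simp [Pi.single_apply, eq_comm]
  have hmom : ∀ (i : Fin 3) s, HasDerivAt (fun s => ∫ x, x i * T (slicePoint s x) 0 0)
      (∫ x, T (slicePoint 0 x) 0 i.succ) s := by
    intro i s
    have h1 := hasDerivAt_integral_charge (J := fun a p => p i.succ * T p a 0) (hmom_bd i)
      (hmom_sm i) s
    simp only [hpd, Finset.sum_add_distrib, ← Finset.mul_sum, hdiv _ 0, mul_zero, zero_add,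
      Finset.sum_ite_eq', Finset.mem_univ, if_true, slicePoint_succ] at h1
    convert h1 using 1
    rw [← hconst]
    exact integral_congr_ae (ae_of_all _ fun x => congrFun (congrFun (hsym _) i.succ) 0)
  have haff : ∀ (i : Fin 3) s, ∫ x, x i * T (slicePoint s x) 0 0
      = (∫ x, x i * T (slicePoint 0 x) 0 0) + s * ∫ x, T (slicePoint 0 x) 0 i.succ := by
    intro i s
    have hd : ∀ s, HasDerivAt (fun s => (∫ x, x i * T (slicePoint s x) 0 0)
        - s * ∫ x, T (slicePoint 0 x) 0 i.succ) 0 s := fun s => by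
      simpa [Pi.sub_def] using (hmom i s).sub ((hasDerivAt_id s).mul_const (∫ x, T (slicePoint 0 x) 0 i.succ))
    have := is_const_of_deriv_eq_zero (fun s => (hd s).differentiableAt) (fun s => (hd s).deriv) s 0
    simp only [zero_mul, sub_zero] at this
    linarith
  refine ⟨fun i => (∫ x, x i * T (slicePoint 0 x) 0 0) / e,
    fun i => (∫ x, T (slicePoint 0 x) 0 i.succ) / e, fun s z δ i hs => ?_⟩
  have hintm : Integrable fun x => x i * T (slicePoint s x) 0 0 :=
    (hmom_bd i 0).integrable (hmom_sm i 0).continuous s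
  have h1 : ‖∫ x, (x i - z) * T (slicePoint s x) 0 0‖ ≤ ∫ x, δ * T (slicePoint s x) 0 0 := by
    refine norm_integral_le_of_norm_le ((hint s).const_mul δ) (ae_of_all _ fun x => ?_)
    rw [norm_mul, Real.norm_of_nonneg (hdec (slicePoint s x)).nonneg]
    by_cases h0 : T (slicePoint s x) = 0
    · simp [h0]
    · exact mul_le_mul_of_nonneg_right (hs _ rfl h0) (hdec _).nonneg
  simp only [sub_mul] at h1
  rw [integral_sub hintm ((hint s).const_mul z), integral_const_mul, integral_const_mul,
    hconst 0 s, haff i s, Real.norm_eq_abs] at h1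
  rw [show (∫ x, x i * T (slicePoint 0 x) 0 0) / e
      + s * ((∫ x, T (slicePoint 0 x) 0 i.succ) / e) - z
      = ((∫ x, x i * T (slicePoint 0 x) 0 0) + s * (∫ x, T (slicePoint 0 x) 0 i.succ) - z * e) / e
      by field_simp, abs_div, abs_of_pos hepos, div_le_iff₀ hepos]
  exact h1

lemma FutureTimelike.abs_lt {x : Vec4} (hx : FutureTimelike x) (i : Fin 3) :
    |x i.succ| < x 0 := by
  obtain ⟨h1, h2⟩ := hx
  refine abs_lt_of_sq_lt_sq ?_ h2.le
  simp only [mink] at h1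
  fin_cases i <;> simp <;> nlinarith [sq_nonneg (x 1), sq_nonneg (x 2), sq_nonneg (x 3)]

lemma abs_sub_le_of_futureTimelike {γ : ℝ → Vec4} (hγ : Differentiable ℝ γ)
    (htl : ∀ t, FutureTimelike (deriv γ t)) (i : Fin 3) (t u : ℝ) :
    |γ t i.succ - γ u i.succ| ≤ |γ t 0 - γ u 0| := by
  have hd : ∀ a t, HasDerivAt (fun t => γ t a) (deriv γ t a) t := fun a t =>
    hasDerivAt_pi.1 (hγ t).hasDerivAt a
  have hmono : ∀ ε : ℝ, |ε| ≤ 1 → Monotone fun t => γ t 0 + ε * γ t i.succ := by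
    intro ε hε
    have hd' : ∀ t, HasDerivAt (fun t => γ t 0 + ε * γ t i.succ)
        (deriv γ t 0 + ε * deriv γ t i.succ) t :=
      fun t => (hd 0 t).add ((hd i.succ t).const_mul ε)
    refine monotone_of_deriv_nonneg (fun t => (hd' t).differentiableAt) fun t => ?_
    rw [(hd' t).deriv]
    have h1 := (htl t).abs_lt i
    have h2 : |ε * deriv γ t i.succ| ≤ |deriv γ t i.succ| := by
      rw [abs_mul]
      exact mul_le_of_le_one_left (abs_nonneg _) hε
    linarith [neg_abs_le (ε * deriv γ t i.succ)]
  have h1 := hmono 1 (by simp)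
  have h2 := hmono (-1) (by simp)
  rcases le_total t u with htu | htu
  all_goals
    have h3 := h1 htu
    have h4 := h2 htu
    simp only [one_mul, neg_mul] at h3 h4
    rw [abs_le]
    constructor <;> cases abs_cases (γ t 0 - γ u 0) <;> linarith

/-- Every timelike curve satisfying the hypothesis of the theorem stays close to affine lines. -/
lemma exists_affine_approx {γ : ℝ → Vec4} (hγ : ContDiff ℝ (⊤ : ℕ∞) γ)
    (htl : ∀ t : ℝ, FutureTimelike (deriv γ t))
    (h : ∀ O : Set Vec4, IsOpen O → Set.range γ ⊆ O →
      ∃ T : Vec4 → Mat4, SmoothMatField T ∧ SymValued T ∧ (∀ p, DEC (T p)) ∧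
        DivFree T ∧ T ≠ 0 ∧ tsupport T ⊆ O) {ε : ℝ} (hε : 0 < ε) :
    ∃ m v : Fin 3 → ℝ, ∀ t i, |m i + γ t 0 * v i - γ t i.succ| ≤ 2 * ε := by
  have hdiff : Differentiable ℝ γ := hγ.differentiable (by simp)
  have hO : IsOpen (Metric.thickening ε (Set.range γ)) := Metric.isOpen_thickening
  obtain ⟨T, hsm, hsym, hdec, hdiv, hne, hsub⟩ :=
    h _ hO (Metric.self_subset_thickening hε _)
  have hclose : ∀ p, T p ≠ 0 → ∃ t, ∀ a, |p a - γ t a| < ε := by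
    intro p hp
    obtain ⟨_, ⟨t, rfl⟩, ht⟩ := Metric.mem_thickening_iff.1 (hsub (subset_tsupport T hp))
    exact ⟨t, fun a => (dist_le_pi_dist p (γ t) a).trans_lt ht⟩
  obtain ⟨m, v, hmv⟩ := exists_centerOfMass hsm hsym hdec hdiv hne
    (C := 2 * ‖γ 0‖ + 2 * ε) <| by
    intro p hp
    obtain ⟨t, ht⟩ := hclose p hp
    have h00 := norm_le_pi_norm (γ 0) 0
    rw [Real.norm_eq_abs] at h00
    have hn := norm_nonneg (γ 0)
    refine (pi_norm_le_iff_of_nonneg (by positivity)).2 fun a => ?_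
    refine Fin.cases ?_ (fun i => ?_) a
    · rw [Real.norm_eq_abs]
      linarith
    · have h0i := norm_le_pi_norm (γ 0) i.succ
      rw [Real.norm_eq_abs] at h0i ⊢
      have h1 := abs_sub_le_of_futureTimelike hdiff htl i t 0
      have h2 := ht 0
      have h3 := ht i.succ
      have h4 : |γ t 0 - γ 0 0| ≤ |p 0 - γ t 0| + |p 0| + |γ 0 0| := by
        cases abs_cases (γ t 0 - γ 0 0) <;> cases abs_cases (p 0 - γ t 0) <;>
          cases abs_cases (p 0) <;> cases abs_cases (γ 0 0) <;> linarith
      have h5 : |p i.succ| ≤ |p i.succ - γ t i.succ| + |γ t i.succ - γ 0 i.succ|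
          + |γ 0 i.succ| := by
        have := abs_add_three (p i.succ - γ t i.succ) (γ t i.succ - γ 0 i.succ) (γ 0 i.succ)
        simpa using this
      linarith
  refine ⟨m, v, fun t i => hmv _ _ _ i fun p hp0 hp => ?_⟩
  obtain ⟨u, hu⟩ := hclose p hp
  have h1 := abs_sub_le_of_futureTimelike hdiff htl i u t
  have h2 := hu 0
  rw [hp0, abs_sub_comm] at h2
  have h3 := abs_sub_le (p i.succ) (γ u i.succ) (γ t i.succ)
  linarith [hu i.succ]

/-- Geroch–Jang theorem in Minkowski spacetime. -/
theorem geroch_jang (γ : ℝ → Vec4) (hγ : ContDiff ℝ (⊤ : ℕ∞) γ)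
    (htl : ∀ t : ℝ, FutureTimelike (deriv γ t))
    (h : ∀ O : Set Vec4, IsOpen O → Set.range γ ⊆ O →
      ∃ T : Vec4 → Mat4, SmoothMatField T ∧ SymValued T ∧ (∀ p, DEC (T p)) ∧
        DivFree T ∧ T ≠ 0 ∧ tsupport T ⊆ O) :
    ∀ t : ℝ, ∃ c : ℝ, deriv (deriv γ) t = c • deriv γ t := by
  have hdiff : Differentiable ℝ γ := hγ.differentiable (by simp)
  have hd : ∀ a t, HasDerivAt (fun t => γ t a) (deriv γ t a) t := fun a t =>
    hasDerivAt_pi.1 (hdiff t).hasDerivAt a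
  have hcol : ∀ (i : Fin 3) t, (γ t i.succ - γ 0 i.succ) * (γ 1 0 - γ 0 0)
      = (γ 1 i.succ - γ 0 i.succ) * (γ t 0 - γ 0 0) := by
    intro i t
    rw [← sub_eq_zero, ← abs_eq_zero]
    refine le_antisymm (le_of_forall_pos_le_add fun η hη => ?_) (abs_nonneg _)
    set K : ℝ := |γ 1 0 - γ 0 0| + |γ t 0 - γ 0 0| + 1 with hK
    have hKpos : 0 < K := by positivity
    obtain ⟨m, v, hmv⟩ := exists_affine_approx hγ htl h (ε := η / (4 * K)) (by positivity)
    set r : ℝ → ℝ := fun u => m i + γ u 0 * v i - γ u i.succ with hr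
    have h1 : ∀ u, |r u - r 0| ≤ η / K := fun u => by
      have := abs_sub (r u) (r 0)
      have hu := hmv u i
      have h0 := hmv 0 i
      have : η / K = 2 * (η / (4 * K)) + 2 * (η / (4 * K)) := by field_simp; ring
      rw [this]
      linarith
    calc |(γ t i.succ - γ 0 i.succ) * (γ 1 0 - γ 0 0)
          - (γ 1 i.succ - γ 0 i.succ) * (γ t 0 - γ 0 0)|
        = |(r 1 - r 0) * (γ t 0 - γ 0 0) - (r t - r 0) * (γ 1 0 - γ 0 0)| := by
          congr 1
          simp only [hr]
          ring
      _ ≤ |(r 1 - r 0) * (γ t 0 - γ 0 0)| + |(r t - r 0) * (γ 1 0 - γ 0 0)| := abs_sub _ _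
      _ ≤ η / K * |γ t 0 - γ 0 0| + η / K * |γ 1 0 - γ 0 0| := by
          rw [abs_mul, abs_mul]
          gcongr <;> exact h1 _
      _ ≤ η / K * K := by
          rw [← mul_add]
          gcongr
          linarith
      _ = 0 + η := by field_simp; ring
  have hmono : StrictMono fun t => γ t 0 :=
    strictMono_of_deriv_pos fun t => by
      rw [(hd 0 t).deriv]
      exact (htl t).2
  have hne : γ 1 0 - γ 0 0 ≠ 0 := (sub_pos.2 (hmono one_pos)).ne'
  obtain ⟨w, hw⟩ : ∃ w : Vec4, w = (γ 1 0 - γ 0 0)⁻¹ • (γ 1 - γ 0) := ⟨_, rfl⟩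
  have hline : ∀ t, γ t = γ 0 + (γ t 0 - γ 0 0) • w := by
    intro t
    ext a
    refine Fin.cases ?_ (fun i => ?_) a
    · simp only [hw, Pi.add_apply, Pi.smul_apply, Pi.sub_apply, smul_eq_mul]
      field_simp
      ring
    · simp only [hw, Pi.add_apply, Pi.smul_apply, Pi.sub_apply, smul_eq_mul]
      field_simp
      linarith [hcol i t]
  have hderiv : deriv γ = fun t => deriv γ t 0 • w := by
    funext t
    refine HasDerivAt.deriv ?_
    have h1 := (((hd 0 t).sub_const (γ 0 0)).smul_const w).const_add (γ 0)
    exact h1.congr_of_eventuallyEq (Eventually.of_forall hline)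
  have hdiff2 : Differentiable ℝ (deriv γ) :=
    ((contDiff_infty_iff_deriv.1 hγ).2).differentiable (by simp)
  intro t
  have h0 : HasDerivAt (fun t => deriv γ t 0) (deriv (deriv γ) t 0) t :=
    hasDerivAt_pi.1 (hdiff2 t).hasDerivAt 0
  have h2 : deriv (deriv γ) t = deriv (deriv γ) t 0 • w :=
    ((h0.smul_const w).congr_of_eventuallyEq (Eventually.of_forall (congrFun hderiv))).deriv
  refine ⟨deriv (deriv γ) t 0 / deriv γ t 0, h2.trans ?_⟩
  conv_rhs => rw [congrFun hderiv t]
  have hw0 : w 0 = 1 := by simp [hw, hne]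
  rw [smul_smul, Pi.smul_apply, hw0, smul_eq_mul, mul_one, div_mul_cancel₀ _ (htl t).2.ne']
end
end
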